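/- arXiv:math/0503602 — 2 statements merged into one kernel-verified Lean document; each statement's English description precedes it below -/
import Mathlib

section
/- A holomorphic function K : 𝔻 → ℂ on the open unit disc is the K-transform of some probability measure on the unit circle S¹ if and only if K maps 𝔻 into 𝔻 and K(0) = 0. In particular: (i) for every probability measure μ on S¹, K_μ is a holomorphic map from 𝔻 to 𝔻 with K_μ(0) = 0; and (ii) for every holomorphic K : 𝔻 → 𝔻 with K(0) = 0 there exists a probability measure μ on S¹ with K = K_μ. -/
/-! The proof works with `1 + ψ_μ(z) = ∫ (1 - z x)⁻¹ dμ(x)`, which equals `1 / (1 - K_μ(z))`.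

For a probability measure `μ` the function `1 + ψ_μ` is holomorphic by differentiation under the
integral sign, and `Re (1 - w)⁻¹ > 1/2` for `|w| < 1`, so `Re ψ_μ > -1/2`, which is the same as
`|ψ_μ| < |1 + ψ_μ|`, that is `|K_μ| < 1`.

Conversely, for a holomorphic self-map `K` of the disc with `K 0 = 0` put `G = 1 / (1 - K)`, so that
`G 0 = 1` and `Re G > 1/2`. For `r < 1` the density `2 Re G (r ζ) - 1` with respect to normalized
arc length is positive of mass one, and Cauchy's formula (`circleAverage_kernel`) gives
`G (r z) = ∫ ζ / (ζ - z) dm_r(ζ)`; pushing `m_r` forward under `ζ ↦ ζ⁻¹` turns the kernel into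
`(1 - z x)⁻¹` (`exists_measure_of_closedBall`). Probability measures on the circle form a weakly
compact space, so a limit point of the pushed-forward measures as `r → 1` represents `G`
(`exists_measure_of_ball`), and its K-transform is `1 - 1 / G = K`. -/

open MeasureTheory Metric

noncomputable instance : MeasurableSpace Circle := borel Circle
instance : BorelSpace Circle := ⟨rfl⟩

/-- `ψ_μ(z) = ∫_{S¹} zx/(1-zx) dμ(x)` for a measure `μ` on the unit circle. -/
noncomputable def psiM (μ : Measure Circle) (z : ℂ) : ℂ :=
  ∫ x : Circle, (z * x) / (1 - z * x) ∂μ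

/-- The K-transform `K_μ(z) = ψ_μ(z)/(1 + ψ_μ(z))` of a measure on the unit circle. -/
noncomputable def Km (μ : Measure Circle) (z : ℂ) : ℂ :=
  psiM μ z / (1 + psiM μ z)

open Filter Topology Complex ComplexConjugate

lemma norm_mul_circle (z : ℂ) (x : Circle) : ‖z * x‖ = ‖z‖ := by
  rw [norm_mul, Circle.norm_coe, mul_one]

lemma one_sub_ne_zero_of_norm {w : ℂ} (hw : ‖w‖ < 1) : 1 - w ≠ 0 := by
  intro h
  rw [← sub_eq_zero.1 h] at hw
  simp at hw

lemma one_sub_mul_circle_ne_zero {z : ℂ} (hz : ‖z‖ < 1) (x : Circle) : 1 - z * x ≠ 0 :=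
  one_sub_ne_zero_of_norm (by rwa [norm_mul_circle])

lemma continuous_kernel {z : ℂ} (hz : ‖z‖ < 1) :
    Continuous fun x : Circle ↦ (1 - z * x)⁻¹ :=
  Continuous.inv₀ (by fun_prop) (one_sub_mul_circle_ne_zero hz)

lemma integrable_of_continuous_circle (μ : Measure Circle) [IsProbabilityMeasure μ]
    {f : Circle → ℂ} (hf : Continuous f) : Integrable f μ :=
  (BoundedContinuousFunction.mkOfCompact ⟨f, hf⟩).integrable μ

lemma one_add_psiM (μ : Measure Circle) [IsProbabilityMeasure μ] {z : ℂ} (hz : ‖z‖ < 1) :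
    1 + psiM μ z = ∫ x : Circle, (1 - z * x)⁻¹ ∂μ := by
  have h : ∀ x : Circle, (z * x) / (1 - z * x) = (1 - z * x)⁻¹ - 1 := fun x ↦ by
    have := one_sub_mul_circle_ne_zero hz x
    field_simp
    ring
  simp only [psiM, h]
  rw [integral_sub (integrable_of_continuous_circle μ (continuous_kernel hz))
    (integrable_const _)]
  simp

/-- A quantitative form of `Re (1 - w)⁻¹ > 1/2`, uniform on `|w| = t`; uniformity lets the strict
inequality survive integration. -/
lemma half_add_le_re_inv {w : ℂ} {t : ℝ} (hw : ‖w‖ = t) (ht : t < 1) :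
    1 / 2 + (1 - t ^ 2) / 8 ≤ ((1 - w)⁻¹).re := by
  have h0 := one_sub_ne_zero_of_norm (hw ▸ ht : ‖w‖ < 1)
  have hN : 0 < normSq (1 - w) := normSq_pos.2 h0
  have ht0 : 0 ≤ t := hw ▸ norm_nonneg w
  have h1 : w.re ^ 2 + w.im ^ 2 = t ^ 2 := by
    rw [← hw, ← normSq_eq_norm_sq, normSq_apply]; ring
  have h2 : normSq (1 - w) = 1 - 2 * w.re + t ^ 2 := by
    rw [normSq_apply, ← h1]; simp; ring
  have h3 : -w.re ≤ 1 := by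
    have := abs_re_le_norm w
    rw [hw] at this
    linarith [neg_abs_le w.re]
  rw [inv_re, le_div_iff₀ hN, h2]
  simp only [sub_re, one_re]
  nlinarith [mul_nonneg (by nlinarith : 0 ≤ 1 - t ^ 2)
    (by nlinarith : 0 ≤ 4 - (1 - 2 * w.re + t ^ 2))]

lemma half_lt_re_integral (μ : Measure Circle) [IsProbabilityMeasure μ] {z : ℂ} (hz : ‖z‖ < 1) :
    1 / 2 < (∫ x : Circle, (1 - z * x)⁻¹ ∂μ).re := by
  have hi := integrable_of_continuous_circle μ (continuous_kernel hz)
  have h : (∫ x : Circle, (1 - z * x)⁻¹ ∂μ).re = ∫ x : Circle, ((1 - z * x)⁻¹).re ∂μ :=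
    (integral_re hi).symm
  rw [h]
  have h1 : ∫ _ : Circle, (1 / 2 + (1 - ‖z‖ ^ 2) / 8) ∂μ ≤ ∫ x : Circle, ((1 - z * x)⁻¹).re ∂μ :=
    integral_mono (integrable_const _) hi.re
      fun x ↦ half_add_le_re_inv (norm_mul_circle z x) hz
  rw [integral_const, probReal_univ, one_smul] at h1
  nlinarith [norm_nonneg z]

lemma differentiableAt_integral (μ : Measure Circle) [IsProbabilityMeasure μ] {z : ℂ}
    (hz : ‖z‖ < 1) :
    DifferentiableAt ℂ (fun w : ℂ ↦ ∫ x : Circle, (1 - w * x)⁻¹ ∂μ) z := by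
  obtain ⟨t, hzt, ht⟩ := exists_between hz
  have hlt : ∀ w ∈ ball (0 : ℂ) t, ‖w‖ < 1 := fun w hw ↦ (mem_ball_zero_iff.1 hw).trans ht
  have hs : ball (0 : ℂ) t ∈ 𝓝 z := isOpen_ball.mem_nhds (mem_ball_zero_iff.2 hzt)
  refine (hasDerivAt_integral_of_dominated_loc_of_deriv_le (𝕜 := ℂ) (s := ball (0 : ℂ) t)
    (F := fun w (x : Circle) ↦ (1 - w * (x : ℂ))⁻¹)
    (F' := fun w (x : Circle) ↦ (x : ℂ) / (1 - w * x) ^ 2) (bound := fun _ ↦ 1 / (1 - t) ^ 2)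
    hs ?_ (integrable_of_continuous_circle μ (continuous_kernel hz)) ?_ ?_
    (integrable_const _) ?_).2.differentiableAt
  · filter_upwards [hs] with w hw
    exact (integrable_of_continuous_circle μ (continuous_kernel (hlt w hw))).1
  · exact (Continuous.div (by fun_prop) (by fun_prop)
      fun x ↦ pow_ne_zero _ (one_sub_mul_circle_ne_zero hz x)).aestronglyMeasurable
  · refine .of_forall fun x w hw ↦ ?_
    have h1 : 1 - t ≤ ‖1 - w * x‖ := by
      have := norm_sub_norm_le (1 : ℂ) (w * x)
      rw [norm_mul_circle, norm_one] at this
      linarith [mem_ball_zero_iff.1 hw]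
    rw [norm_div, norm_pow, Circle.norm_coe]
    have : 0 < 1 - t := by linarith
    gcongr
  · refine .of_forall fun x w hw ↦ ?_
    have h := (((hasDerivAt_id w).mul_const (x : ℂ)).const_sub 1).fun_inv
      (one_sub_mul_circle_ne_zero (hlt w hw) x)
    simpa using h

/-- The real part of `ψ + 1/2` measures how much closer `ψ` is to `0` than to `-1`. -/
lemma norm_lt_norm_one_add {w : ℂ} (hw : 1 / 2 < (1 + w).re) : ‖w‖ < ‖1 + w‖ := by
  rw [← sq_lt_sq₀ (norm_nonneg _) (norm_nonneg _), ← normSq_eq_norm_sq, ← normSq_eq_norm_sq,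
    normSq_apply, normSq_apply]
  simp only [add_re, one_re, add_im, one_im] at *
  nlinarith

lemma half_lt_re_one_add_psiM (μ : Measure Circle) [IsProbabilityMeasure μ] {z : ℂ}
    (hz : ‖z‖ < 1) : 1 / 2 < (1 + psiM μ z).re := by
  rw [one_add_psiM μ hz]
  exact half_lt_re_integral μ hz

lemma one_add_psiM_ne_zero (μ : Measure Circle) [IsProbabilityMeasure μ] {z : ℂ}
    (hz : ‖z‖ < 1) : 1 + psiM μ z ≠ 0 := by
  intro h
  have := half_lt_re_one_add_psiM μ hz
  rw [h, zero_re] at this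
  norm_num at this

lemma Km_eq (μ : Measure Circle) [IsProbabilityMeasure μ] {z : ℂ} (hz : ‖z‖ < 1) :
    Km μ z = 1 - (∫ x : Circle, (1 - z * x)⁻¹ ∂μ)⁻¹ := by
  have := one_add_psiM_ne_zero μ hz
  rw [← one_add_psiM μ hz, Km]
  field_simp
  ring

lemma Km_properties (μ : Measure Circle) [IsProbabilityMeasure μ] :
    DifferentiableOn ℂ (Km μ) (ball (0 : ℂ) 1) ∧
      Set.MapsTo (Km μ) (ball (0 : ℂ) 1) (ball (0 : ℂ) 1) ∧ Km μ 0 = 0 := by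
  refine ⟨?_, fun z hz ↦ ?_, by simp [Km, psiM]⟩
  · have h : DifferentiableOn ℂ (fun z : ℂ ↦ 1 - (∫ x : Circle, (1 - z * x)⁻¹ ∂μ)⁻¹)
        (ball (0 : ℂ) 1) := fun z hz ↦ by
      have hz' := mem_ball_zero_iff.1 hz
      refine (((differentiableAt_integral μ hz').inv ?_).const_sub 1).differentiableWithinAt
      rw [← one_add_psiM μ hz']
      exact one_add_psiM_ne_zero μ hz'
    exact h.congr fun z hz ↦ Km_eq μ (mem_ball_zero_iff.1 hz)
  · have hz' := mem_ball_zero_iff.1 hz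
    rw [mem_ball_zero_iff, Km, norm_div,
      div_lt_one (norm_pos_iff.2 (one_add_psiM_ne_zero μ hz'))]
    exact norm_lt_norm_one_add (half_lt_re_one_add_psiM μ hz')

/-- The Schwarz integral formula in terms of the Cauchy kernel. Writing `2 Re G = G + conj G`, the
holomorphic half contributes `G z` by Cauchy's formula. On the circle the conjugate half is
the conjugate of `G ζ / (1 - conj z * ζ)`, which is holomorphic in `ζ`, so by the mean value
property it contributes `conj (G 0) = 1`, cancelling the constant `-1`. -/
lemma circleAverage_kernel {G : ℂ → ℂ} (hG : DiffContOnCl ℂ G (ball 0 1)) (h0 : G 0 = 1)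
    {z : ℂ} (hz : ‖z‖ < 1) :
    Real.circleAverage (fun ζ ↦ ((2 * (G ζ).re - 1 : ℝ) : ℂ) * (ζ / (ζ - z))) 0 1 = G z := by
  have hcl : closure (ball (0 : ℂ) 1) = closedBall 0 1 := closure_ball _ one_ne_zero
  have hGc : ContinuousOn G (sphere 0 1) :=
    (hcl ▸ hG.continuousOn).mono sphere_subset_closedBall
  have hne : ∀ ζ ∈ sphere (0 : ℂ) 1, ζ - z ≠ 0 := by
    intro ζ hζ h
    rw [sub_eq_zero.1 h, mem_sphere_zero_iff_norm] at hζ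
    exact hz.ne hζ
  have hconj : ∀ ζ ∈ closedBall (0 : ℂ) 1, 1 - conj z * ζ ≠ 0 := by
    intro ζ hζ
    refine one_sub_ne_zero_of_norm ?_
    rw [norm_mul, RCLike.norm_conj]
    exact (mul_le_of_le_one_right (norm_nonneg _) (mem_closedBall_zero_iff.1 hζ)).trans_lt hz
  let A : ℂ → ℂ := fun ζ ↦ ((ζ - 0) / (ζ - z)) • (G ζ - 1)
  let B : ℂ → ℂ := fun ζ ↦ (1 - conj z * ζ)⁻¹ * G ζ
  have hB : DiffContOnCl ℂ B (ball 0 1) := by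
    refine DiffContOnCl.smul (𝕜 := ℂ) (c := fun ζ ↦ (1 - conj z * ζ)⁻¹) ?_ hG
    refine DiffContOnCl.inv (Differentiable.diffContOnCl (by fun_prop)) ?_
    rw [hcl]
    exact hconj
  have hA1 : Real.circleAverage A 0 1 = G z - 1 :=
    DiffContOnCl.circleAverage_smul_div (f := fun ζ ↦ G ζ - 1) (c := 0) (R := 1)
      (by simpa using hG.sub_const 1) (by simpa using hz)
  have hB1 : Real.circleAverage B 0 1 = 1 := by
    rw [DiffContOnCl.circleAverage (by simpa using hB)]
    simp [B, h0]
  have hAi : CircleIntegrable A 0 1 := by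
    refine ContinuousOn.circleIntegrable zero_le_one ?_
    exact ContinuousOn.smul (ContinuousOn.div (by fun_prop) (by fun_prop) hne)
      (hGc.sub continuousOn_const)
  have hBi : CircleIntegrable B 0 1 :=
    ContinuousOn.circleIntegrable zero_le_one
      ((hcl ▸ hB.continuousOn).mono sphere_subset_closedBall)
  have hCi : CircleIntegrable (fun ζ ↦ conj (B ζ)) 0 1 :=
    ContinuousOn.circleIntegrable zero_le_one
      (continuous_conj.comp_continuousOn
        ((hcl ▸ hB.continuousOn).mono sphere_subset_closedBall))
  have hC1 : Real.circleAverage (fun ζ ↦ conj (B ζ)) 0 1 = 1 := by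
    have := ContinuousLinearMap.circleAverage_comp_comm
      (conjCLE : ℂ →L[ℝ] ℂ) hBi
    rw [hB1] at this
    simpa [Function.comp_def] using this
  have hsum : Set.EqOn (fun ζ ↦ ((2 * (G ζ).re - 1 : ℝ) : ℂ) * (ζ / (ζ - z)))
      (fun ζ ↦ A ζ + conj (B ζ)) (sphere 0 |1|) := by
    intro ζ hζ
    rw [abs_one] at hζ
    have h1 := hne ζ hζ
    have hζ0 : ζ * conj ζ = 1 := by
      rw [mul_conj, normSq_eq_norm_sq, mem_sphere_zero_iff_norm.1 hζ]; simp
    have h2 : (ζ / (ζ - z)) = (1 - z * conj ζ)⁻¹ := by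
      have h3 : ζ - z = ζ * (1 - z * conj ζ) := by linear_combination z * hζ0
      have h4 : ζ ≠ 0 := left_ne_zero_of_mul_eq_one hζ0
      rw [h3, div_mul_eq_div_div, div_self h4, one_div]
    have hre : ((2 * (G ζ).re - 1 : ℝ) : ℂ) = G ζ + conj (G ζ) - 1 := by
      rw [add_conj]; push_cast; ring
    simp only [A, B, sub_zero, map_mul, map_inv₀, map_sub, map_one, conj_conj, smul_eq_mul]
    rw [← h2, hre]
    ring
  rw [Real.circleAverage_congr_sphere hsum, Real.circleAverage_fun_add hAi hCi, hA1, hC1]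
  ring

/-- The representing measure when `G` extends continuously to the closed disc: the image of
`(2 Re G (e^{iθ}) - 1) dθ / 2π` under `θ ↦ e^{-iθ}`. -/
lemma exists_measure_of_closedBall {G : ℂ → ℂ} (hG : DiffContOnCl ℂ G (ball 0 1)) (h0 : G 0 = 1)
    (hre : ∀ ζ ∈ sphere (0 : ℂ) 1, 1 / 2 ≤ (G ζ).re) :
    ∃ μ : ProbabilityMeasure Circle, ∀ z : ℂ, ‖z‖ < 1 →
      ∫ x : Circle, (1 - z * x)⁻¹ ∂(μ : Measure Circle) = G z := by
  have hcl : closure (ball (0 : ℂ) 1) = closedBall 0 1 := closure_ball _ one_ne_zero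
  have hGc : ContinuousOn G (sphere 0 1) :=
    (hcl ▸ hG.continuousOn).mono sphere_subset_closedBall
  have hmem : ∀ θ : ℝ, circleMap 0 1 θ ∈ sphere (0 : ℂ) 1 :=
    fun θ ↦ circleMap_mem_sphere 0 zero_le_one θ
  let h : ℝ → ℝ := fun θ ↦ (2 * Real.pi)⁻¹ * (2 * (G (circleMap 0 1 θ)).re - 1)
  have hc : Continuous h := by
    have : Continuous fun θ ↦ G (circleMap 0 1 θ) :=
      hGc.comp_continuous (continuous_circleMap 0 1) hmem
    exact ((continuous_const.mul (continuous_re.comp this)).sub continuous_const).const_mul _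
  have hpos : ∀ θ, 0 ≤ h θ := fun θ ↦ by
    have := hre _ (hmem θ)
    have : 0 ≤ 2 * (G (circleMap 0 1 θ)).re - 1 := by linarith
    positivity
  let ν : Measure ℝ := (volume.restrict (Set.Ioc 0 (2 * Real.pi))).withDensity
    fun θ ↦ ENNReal.ofReal (h θ)
  let e : ℝ → Circle := fun θ ↦ (Circle.exp θ)⁻¹
  have he : Measurable e := by
    have : Continuous e := by fun_prop
    exact this.measurable
  have hint : ∀ f : Circle → ℂ, Continuous f → ∫ x, f x ∂(ν.map e) =
      ∫ θ in (0)..(2 * Real.pi), (h θ : ℂ) * f (e θ) := by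
    intro f hf
    rw [integral_map he.aemeasurable hf.aestronglyMeasurable,
      integral_withDensity_eq_integral_toReal_smul (by fun_prop) (by simp),
      intervalIntegral.integral_of_le (by positivity)]
    refine integral_congr_ae (.of_forall fun θ ↦ ?_)
    simp [ENNReal.toReal_ofReal (hpos θ)]
  have hker : ∀ z : ℂ, ‖z‖ < 1 → ∫ x : Circle, (1 - z * x)⁻¹ ∂(ν.map e) = G z := by
    intro z hz
    rw [hint _ (continuous_kernel hz), ← circleAverage_kernel hG h0 hz, Real.circleAverage_def,
      ← intervalIntegral.integral_smul]
    refine intervalIntegral.integral_congr fun θ _ ↦ ?_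
    have hE : circleMap 0 1 θ ≠ 0 := circleMap_ne_center one_ne_zero
    have h2 : (circleMap 0 1 θ / (circleMap 0 1 θ - z)) = (1 - z * (e θ : ℂ))⁻¹ := by
      have h5 : (e θ : ℂ) = (circleMap 0 1 θ)⁻¹ := by simp [e, circleMap]
      have h3 : circleMap 0 1 θ - z = circleMap 0 1 θ * (1 - z * (e θ : ℂ)) := by
        rw [h5]; field_simp
      rw [h3, div_mul_eq_div_div, div_self hE, one_div]
    simp only [h, h2, Complex.real_smul]
    push_cast
    ring
  have hfin : IsFiniteMeasure ν := by
    refine isFiniteMeasure_withDensity_ofReal ?_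
    exact ((hc.integrableOn_Icc (a := 0) (b := 2 * Real.pi)).mono_set Set.Ioc_subset_Icc_self).2
  -- evaluating the representation at `z = 0` computes the total mass
  have hprob : IsProbabilityMeasure (ν.map e) := by
    have h1 := hker 0 (by simp)
    have : IsFiniteMeasure (ν.map e) := inferInstance
    rw [h0] at h1
    simp only [zero_mul, sub_zero, inv_one, integral_const, Complex.real_smul, mul_one] at h1
    have h2 : (ν.map e).real Set.univ = 1 := by exact_mod_cast h1
    exact ⟨by rwa [Measure.real, ENNReal.toReal_eq_one_iff] at h2⟩
  exact ⟨⟨ν.map e, hprob⟩, hker⟩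

lemma exists_measure_of_ball {G : ℂ → ℂ} (hG : DifferentiableOn ℂ G (ball 0 1)) (h0 : G 0 = 1)
    (hre : ∀ ζ ∈ ball (0 : ℂ) 1, 1 / 2 ≤ (G ζ).re) :
    ∃ μ : ProbabilityMeasure Circle, ∀ z : ℂ, ‖z‖ < 1 →
      ∫ x : Circle, (1 - z * x)⁻¹ ∂(μ : Measure Circle) = G z := by
  let r : ℕ → ℝ := fun n ↦ 1 - 1 / ((n : ℝ) + 1)
  have hr0 : ∀ n, 0 ≤ r n := fun n ↦ by
    have : 1 / ((n : ℝ) + 1) ≤ 1 := by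
      rw [div_le_one (by positivity)]; linarith [n.cast_nonneg (α := ℝ)]
    simp only [r]; linarith
  have hr1 : ∀ n, r n < 1 := fun n ↦ by
    have : 0 < 1 / ((n : ℝ) + 1) := by positivity
    simp only [r]; linarith
  have hrt : Tendsto r atTop (𝓝 1) := by
    simpa [r] using (tendsto_one_div_add_atTop_nhds_zero_nat (𝕜 := ℝ)).const_sub 1
  have hmem : ∀ n, ∀ ζ ∈ closedBall (0 : ℂ) 1, (r n : ℂ) * ζ ∈ ball (0 : ℂ) 1 := by
    intro n ζ hζ
    rw [mem_ball_zero_iff, norm_mul, norm_real, Real.norm_of_nonneg (hr0 n)]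
    exact (mul_le_of_le_one_right (hr0 n) (mem_closedBall_zero_iff.1 hζ)).trans_lt (hr1 n)
  have hμ : ∀ n, ∃ μ : ProbabilityMeasure Circle, ∀ z : ℂ, ‖z‖ < 1 →
      ∫ x : Circle, (1 - z * x)⁻¹ ∂(μ : Measure Circle) = G (r n * z) := by
    intro n
    refine exists_measure_of_closedBall (G := fun z ↦ G (r n * z)) ?_ (by simpa using h0) ?_
    · refine DifferentiableOn.diffContOnCl ?_
      rw [closure_ball _ one_ne_zero]
      exact hG.comp (by fun_prop) (hmem n)
    · exact fun ζ hζ ↦ hre _ (hmem n ζ (sphere_subset_closedBall hζ))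
  choose μs hμs using hμ
  -- along an ultrafilter finer than `atTop`, weak compactness gives a limit
  let F : Ultrafilter ℕ := hyperfilter ℕ
  obtain ⟨μ, -, hlim⟩ := isCompact_univ.ultrafilter_le_nhds (F.map μs) (by simp)
  refine ⟨μ, fun z hz ↦ ?_⟩
  have hlim' : Tendsto μs F (𝓝 μ) := hlim
  have h1 := (ProbabilityMeasure.tendsto_iff_forall_integral_rclike_tendsto ℂ).1 hlim'
    (BoundedContinuousFunction.mkOfCompact ⟨_, continuous_kernel hz⟩)
  have h2 : Tendsto (fun n ↦ G (r n * z)) F (𝓝 (G z)) := by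
    have hF : (F : Filter ℕ) ≤ atTop := Nat.hyperfilter_le_atTop
    have hcont : ContinuousAt G z :=
      (hG.differentiableAt (isOpen_ball.mem_nhds (mem_ball_zero_iff.2 hz))).continuousAt
    have h3 : Tendsto (fun n ↦ (r n : ℂ) * z) atTop (𝓝 z) := by
      simpa using ((continuous_ofReal.tendsto 1).comp hrt).mul_const z
    exact (hcont.tendsto.comp h3).mono_left hF
  refine tendsto_nhds_unique h1 ?_
  simpa [hμs _ z hz] using h2

lemma exists_measure_of_mapsTo {K : ℂ → ℂ} (hK : DifferentiableOn ℂ K (ball 0 1))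
    (hm : Set.MapsTo K (ball (0 : ℂ) 1) (ball (0 : ℂ) 1)) (h0 : K 0 = 0) :
    ∃ μ : Measure Circle, IsProbabilityMeasure μ ∧ Set.EqOn K (Km μ) (ball (0 : ℂ) 1) := by
  have hlt : ∀ z ∈ ball (0 : ℂ) 1, ‖K z‖ < 1 := fun z hz ↦ mem_ball_zero_iff.1 (hm hz)
  obtain ⟨μ, hμ⟩ := exists_measure_of_ball (G := fun z ↦ (1 - K z)⁻¹)
    ((hK.const_sub 1).inv fun z hz ↦ one_sub_ne_zero_of_norm (hlt z hz)) (by simp [h0])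
    (fun z hz ↦ by
      have h1 := half_add_le_re_inv rfl (hlt z hz)
      have h2 : ‖K z‖ ^ 2 ≤ 1 := pow_le_one₀ (norm_nonneg _) (hlt z hz).le
      linarith)
  refine ⟨μ, inferInstance, fun z hz ↦ ?_⟩
  have hz' := mem_ball_zero_iff.1 hz
  rw [Km_eq _ hz', hμ z hz', inv_inv]
  ring

/-- A holomorphic function `K` on the open unit disc is the K-transform of a
probability measure on the unit circle if and only if it maps the disc into itself
and `K(0) = 0`; moreover every K-transform is such a function. -/
theorem Ktransform_characterization :
    (∀ (μ : Measure Circle), IsProbabilityMeasure μ →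
      DifferentiableOn ℂ (Km μ) (ball (0 : ℂ) 1) ∧
      Set.MapsTo (Km μ) (ball (0 : ℂ) 1) (ball (0 : ℂ) 1) ∧
      Km μ 0 = 0) ∧
    (∀ K : ℂ → ℂ, DifferentiableOn ℂ K (ball (0 : ℂ) 1) →
      ((∃ μ : Measure Circle, IsProbabilityMeasure μ ∧ Set.EqOn K (Km μ) (ball (0 : ℂ) 1)) ↔
        (Set.MapsTo K (ball (0 : ℂ) 1) (ball (0 : ℂ) 1) ∧ K 0 = 0))) := by
  refine ⟨fun μ hμ ↦ Km_properties μ, fun K hK ↦ ⟨?_, fun h ↦ exists_measure_of_mapsTo hK h.1 h.2⟩⟩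
  rintro ⟨μ, hμ, hEq⟩
  obtain ⟨-, hm, h0⟩ := Km_properties μ
  exact ⟨hm.congr hEq.symm, (hEq (mem_ball_self one_pos)).trans h0⟩
end

section
/- Let u : 𝔻 → ℂ be holomorphic, not identically zero, with Re u(z) ≥ 0 for all z ∈ 𝔻; set β = u(0) and v(z) = −z·u(z) for z ∈ 𝔻. Then for every t ≥ 0 there is exactly one holomorphic function f : 𝔻 → 𝔻 satisfying v(f(z)) = v(z)·f′(z) for all z ∈ 𝔻 and f′(0) = e^{−tβ}. In particular, any two holomorphic self-maps f, g of 𝔻 satisfying this functional equation with f′(0) = g′(0) = e^{−tβ} coincide. -/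
/-!
The function `u` has no zeros (open mapping theorem), so with `v(z) = -z u(z)` the linear equation
`v h' = -u(0) h`, `h(0) = 0`, has a holomorphic solution `h(z) = z exp (G z)` on the disc, its
Koenigs function, and `h'` vanishes nowhere (`exists_koenigs`).

If `g` is a holomorphic self-map with `v ∘ g = v g'`, then `g(0) = 0` and `h ∘ g` solves the same
linear equation as `h`. This forces `h ∘ g = g'(0) h` (`koenigs_comp_eq`); since `h` is injective
near `0`, the germ of `g` at `0`, and hence `g`, is determined by `g'(0)` (`eqOn_of_comp_eq`).

For existence, `f` is the time-`t` map of the flow of `v`. Trajectories exist up to time `t` since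
`Re u ≥ 0` makes `|z|` nonincreasing along them (`exists_flow`). Along a trajectory `h` is
multiplied by `exp (-t u(0))`, so `h ∘ f = exp (-t u(0)) h`. As `f` is continuous and `h` locally
biholomorphic, `f` is holomorphic (`exists_local_solution`), and differentiating this relation gives
both the functional equation and the value of `f'(0)`. The flow is built on balls of radius `r < 1`
only; the resulting maps agree on overlaps by `eqOn_of_comp_eq`.
-/

open Metric Set

/-- By the open mapping theorem, a function with nonnegative real part that vanishes somewhere is
identically zero. -/
lemma ne_zero_of_re_nonneg {u : ℂ → ℂ} (hu : DifferentiableOn ℂ u (ball (0 : ℂ) 1))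
    (hu0 : ¬ ∀ z ∈ ball (0 : ℂ) 1, u z = 0) (hure : ∀ z ∈ ball (0 : ℂ) 1, 0 ≤ (u z).re) :
    ∀ z ∈ ball (0 : ℂ) 1, u z ≠ 0 := by
  intro z₀ hz₀ h0
  rcases (hu.analyticOnNhd isOpen_ball).is_constant_or_isOpen
    (convex_ball (0 : ℂ) 1).isPreconnected with ⟨w, hw⟩ | hop
  · exact hu0 fun z hz => by rw [hw z hz, ← hw z₀ hz₀, h0]
  · have h1 := hop _ Subset.rfl isOpen_ball
    obtain ⟨ε, hε, hsub⟩ := Metric.isOpen_iff.mp h1 0 ⟨z₀, hz₀, h0⟩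
    have hm : (-(ε / 2 : ℝ) : ℂ) ∈ ball (0 : ℂ) ε := by
      rw [mem_ball_zero_iff, norm_neg, Complex.norm_real, Real.norm_of_nonneg (by positivity)]
      linarith
    obtain ⟨z, hz, hzu⟩ := hsub hm
    have := hure z hz
    rw [hzu] at this
    simp only [Complex.neg_re, Complex.ofReal_re] at this
    linarith

/-- The Koenigs function of `v(z) = -z u(z)` is `h(z) = z exp (G z)`, where
`G' = (u 0 / u - 1) / z` (a removable singularity at `0`). It solves `v h' = -u(0) h`. -/
lemma exists_koenigs {u : ℂ → ℂ} (hu : DifferentiableOn ℂ u (ball (0 : ℂ) 1))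
    (hne : ∀ z ∈ ball (0 : ℂ) 1, u z ≠ 0) :
    ∃ G G' : ℂ → ℂ, (∀ z ∈ ball (0 : ℂ) 1, HasDerivAt G (G' z) z) ∧
      (∀ z ∈ ball (0 : ℂ) 1, z * G' z = u 0 / u z - 1) ∧
      ∀ z ∈ ball (0 : ℂ) 1,
        HasDerivAt (fun z => z * Complex.exp (G z)) (Complex.exp (G z) * (u 0 / u z)) z := by
  have h0 : (0 : ℂ) ∈ ball (0 : ℂ) 1 := mem_ball_self one_pos
  have hd : DifferentiableOn ℂ (fun z => u 0 / u z) (ball (0 : ℂ) 1) :=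
    (differentiableOn_const _).div hu hne
  have hq := (Complex.differentiableOn_dslope (ball_mem_nhds (0 : ℂ) one_pos)).mpr hd
  obtain ⟨G, hG⟩ := hq.isExactOn_ball
  have hG' : ∀ z ∈ ball (0 : ℂ) 1,
      z * dslope (fun z => u 0 / u z) 0 z = u 0 / u z - 1 := by
    intro z hz
    have := sub_smul_dslope (fun z => u 0 / u z) 0 z
    simpa [div_self (hne 0 h0)] using this
  refine ⟨G, _, hG, hG', fun z hz => ?_⟩
  convert! (hasDerivAt_id z).mul (hG z hz).cexp using 1
  have := hG' z hz
  simp only [id]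
  linear_combination -Complex.exp (G z) * this

/-- Euler's equation `z W' = W` has only linear holomorphic solutions. -/
lemma eq_mul_of_mul_deriv_eq {W : ℂ → ℂ} (hW : DifferentiableOn ℂ W (ball (0 : ℂ) 1))
    (h : ∀ z ∈ ball (0 : ℂ) 1, z * deriv W z = W z) :
    ∀ z ∈ ball (0 : ℂ) 1, W z = deriv W 0 * z := by
  have h0 : (0 : ℂ) ∈ ball (0 : ℂ) 1 := mem_ball_self one_pos
  have hW0 : W 0 = 0 := by simpa using (h 0 h0).symm
  have hk := (Complex.differentiableOn_dslope (ball_mem_nhds (0 : ℂ) one_pos)).mpr hW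
  have hWk : ∀ z, W z = z * dslope W 0 z := fun z => by
    simpa [hW0] using (sub_smul_dslope W 0 z).symm
  have hk' : ∀ z ∈ ball (0 : ℂ) 1, z ≠ 0 → deriv (dslope W 0) z = 0 := by
    intro z hz hz0
    have h1 : HasDerivAt (dslope W 0) (deriv (dslope W 0) z) z :=
      (hk.differentiableAt (isOpen_ball.mem_nhds hz)).hasDerivAt
    have h2 := (hasDerivAt_id z).mul h1
    have h3 : W = id * dslope W 0 := funext hWk
    rw [← h3] at h2
    have h4 := h z hz
    rw [h2.deriv, hWk z] at h4
    simp only [id] at h4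
    have : z * (z * deriv (dslope W 0) z) = 0 := by linear_combination h4
    simpa [hz0] using this
  have hk0 : deriv (dslope W 0) 0 = 0 := by
    have hc : ContinuousAt (deriv (dslope W 0)) 0 :=
      ((hk.deriv isOpen_ball).continuousOn).continuousAt (ball_mem_nhds _ one_pos)
    have hc' := hc.tendsto.mono_left (nhdsWithin_le_nhds (s := {0}ᶜ))
    refine tendsto_nhds_unique hc' (tendsto_const_nhds.congr' ?_)
    filter_upwards [self_mem_nhdsWithin, mem_nhdsWithin_of_mem_nhds (ball_mem_nhds (0 : ℂ) one_pos)]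
      with z hz hz1
    exact (hk' z hz1 hz).symm
  intro z hz
  have := isOpen_ball.is_const_of_deriv_eq_zero (convex_ball (0 : ℂ) 1).isPreconnected hk
    (fun z hz => by
      by_cases hz0 : z = 0
      · rw [hz0]; exact hk0
      · exact hk' z hz hz0) hz h0
  rw [hWk z, this, dslope_same, mul_comm]

/-- Solutions of the functional equation are conjugated by the Koenigs function to multiplication
by their derivative at `0`: the function `W = (h ∘ g) exp (-G)` solves Euler's equation. -/
lemma koenigs_comp_eq {u G G' : ℂ → ℂ}
    (hne : ∀ z ∈ ball (0 : ℂ) 1, u z ≠ 0)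
    (hG : ∀ z ∈ ball (0 : ℂ) 1, HasDerivAt G (G' z) z)
    (hG' : ∀ z ∈ ball (0 : ℂ) 1, z * G' z = u 0 / u z - 1)
    (hh : ∀ z ∈ ball (0 : ℂ) 1,
        HasDerivAt (fun z => z * Complex.exp (G z)) (Complex.exp (G z) * (u 0 / u z)) z)
    {g : ℂ → ℂ} (hg : DifferentiableOn ℂ g (ball (0 : ℂ) 1))
    (hmaps : MapsTo g (ball (0 : ℂ) 1) (ball (0 : ℂ) 1))
    (hfe : ∀ z ∈ ball (0 : ℂ) 1, -(g z) * u (g z) = (-z * u z) * deriv g z) :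
    g 0 = 0 ∧ ∀ z ∈ ball (0 : ℂ) 1,
      g z * Complex.exp (G (g z)) = deriv g 0 * (z * Complex.exp (G z)) := by
  have h0 : (0 : ℂ) ∈ ball (0 : ℂ) 1 := mem_ball_self one_pos
  have hg0 : g 0 = 0 := by
    have := hfe 0 h0
    simpa [hne _ (hmaps h0)] using this
  refine ⟨hg0, ?_⟩
  set W : ℂ → ℂ := fun z => g z * Complex.exp (G (g z)) * Complex.exp (-G z) with hWdef
  have hW : ∀ z ∈ ball (0 : ℂ) 1, HasDerivAt W
      (Complex.exp (G (g z)) * (u 0 / u (g z)) * deriv g z * Complex.exp (-G z) +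
        g z * Complex.exp (G (g z)) * (Complex.exp (-G z) * -G' z)) z := by
    intro z hz
    have h1 := (hg.differentiableAt (isOpen_ball.mem_nhds hz)).hasDerivAt
    exact ((hh _ (hmaps hz)).comp z h1).mul (hG z hz).neg.cexp
  have hE : ∀ z ∈ ball (0 : ℂ) 1, z * deriv W z = W z := by
    intro z hz
    rw [(hW z hz).deriv]
    have h1 : z * deriv g z = g z * u (g z) / u z := by
      rw [eq_div_iff (hne z hz)]; linear_combination hfe z hz
    have h2 : u 0 / u (g z) * (g z * u (g z) / u z) = u 0 / u z * g z := by
      have := hne z hz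
      have := hne _ (hmaps hz)
      field_simp
    rw [← h1] at h2
    simp only [hWdef]
    linear_combination Complex.exp (G (g z)) * Complex.exp (-G z) * h2 -
      Complex.exp (G (g z)) * Complex.exp (-G z) * g z * hG' z hz
  have hlin := eq_mul_of_mul_deriv_eq
    (fun z hz => (hW z hz).differentiableAt.differentiableWithinAt) hE
  have hW0 : deriv W 0 = deriv g 0 := by
    rw [(hW 0 h0).deriv, hg0, div_self (hne 0 h0), mul_one, zero_mul, zero_mul, add_zero,
      mul_right_comm, ← Complex.exp_add, add_neg_cancel, Complex.exp_zero, one_mul]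
  intro z hz
  have h1 := hlin z hz
  rw [hW0] at h1
  simp only [hWdef, Complex.exp_neg] at h1
  have h2 := Complex.exp_ne_zero (G z)
  field_simp at h1
  linear_combination h1

/-- The Koenigs function is injective near `0`, so a holomorphic germ fixing `0` is determined by
its composition with it; the identity theorem propagates this to the ball. -/
lemma eqOn_of_comp_eq {h f g : ℂ → ℂ} {R : ℝ} (hR : 0 < R)
    (hh : DifferentiableOn ℂ h (ball (0 : ℂ) 1)) (hh' : deriv h 0 ≠ 0)
    (hf : DifferentiableOn ℂ f (ball (0 : ℂ) R)) (hg : DifferentiableOn ℂ g (ball (0 : ℂ) R))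
    (hf0 : f 0 = 0) (hg0 : g 0 = 0) (he : ∀ z ∈ ball (0 : ℂ) R, h (f z) = h (g z)) :
    EqOn f g (ball (0 : ℂ) R) := by
  have hRn := ball_mem_nhds (0 : ℂ) hR
  have hs : HasStrictDerivAt h (deriv h 0) 0 :=
    (hh.analyticOnNhd isOpen_ball 0 (mem_ball_self one_pos)).hasStrictDerivAt
  have hl := HasStrictDerivAt.eventually_left_inverse hs hh'
  have hfc : Filter.Tendsto f (nhds 0) (nhds 0) := by
    simpa [hf0] using (hf.differentiableAt hRn).continuousAt.tendsto
  have hgc : Filter.Tendsto g (nhds 0) (nhds 0) := by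
    simpa [hg0] using (hg.differentiableAt hRn).continuousAt.tendsto
  refine (hf.analyticOnNhd isOpen_ball).eqOn_of_preconnected_of_eventuallyEq
    (hg.analyticOnNhd isOpen_ball) (convex_ball (0 : ℂ) R).isPreconnected (mem_ball_self hR) ?_
  filter_upwards [hfc.eventually hl, hgc.eventually hl, hRn] with z h1 h2 h3
  rw [← h1, ← h2, he z h3]

/-- The radial retraction of `ℂ` onto the closed ball of radius `r`. -/
noncomputable def radial (r : ℝ) (z : ℂ) : ℂ := ((r / max r ‖z‖ : ℝ) : ℂ) * z

lemma radial_of_norm_le {r : ℝ} (hr : 0 < r) {z : ℂ} (hz : ‖z‖ ≤ r) : radial r z = z := by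
  simp [radial, max_eq_left hz, hr.ne']

lemma norm_radial_le {r : ℝ} (hr : 0 < r) (z : ℂ) : ‖radial r z‖ ≤ r := by
  have hM : 0 < max r ‖z‖ := lt_max_of_lt_left hr
  rw [radial, norm_mul, Complex.norm_real, Real.norm_of_nonneg (by positivity), div_mul_eq_mul_div,
    div_le_iff₀ hM]
  exact mul_le_mul_of_nonneg_left (le_max_right _ _) hr.le

lemma lipschitzWith_radial {r : ℝ} (hr : 0 < r) : LipschitzWith 2 (radial r) := by
  refine LipschitzWith.of_dist_le_mul fun z w => ?_
  rw [dist_eq_norm, dist_eq_norm]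
  have hM : 0 < max r ‖z‖ := lt_max_of_lt_left hr
  have hN : 0 < max r ‖w‖ := lt_max_of_lt_left hr
  have e : radial r z - radial r w = ((r / max r ‖z‖ : ℝ) : ℂ) * (z - w) +
      ((r / max r ‖z‖ * ((max r ‖w‖ - max r ‖z‖) / max r ‖w‖) : ℝ) : ℂ) * w := by
    have : r / max r ‖z‖ * ((max r ‖w‖ - max r ‖z‖) / max r ‖w‖) =
      r / max r ‖z‖ - r / max r ‖w‖ := by field_simp
    rw [this, radial, radial]; push_cast; ring
  have h1 : r / max r ‖z‖ ≤ 1 := (div_le_one hM).mpr (le_max_left _ _)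
  have h1' : 0 ≤ r / max r ‖z‖ := by positivity
  have h2 : ‖w‖ / max r ‖w‖ ≤ 1 := (div_le_one hN).mpr (le_max_right _ _)
  have h3 : |max r ‖w‖ - max r ‖z‖| ≤ ‖z - w‖ := by
    refine (abs_max_sub_max_le_max r ‖w‖ r ‖z‖).trans ?_
    rw [sub_self, abs_zero, max_eq_right (abs_nonneg _), norm_sub_rev]
    exact abs_norm_sub_norm_le w z
  rw [e]
  refine (norm_add_le _ _).trans ?_
  rw [norm_mul, norm_mul, Complex.norm_real, Complex.norm_real, Real.norm_of_nonneg h1',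
    norm_mul, Real.norm_of_nonneg h1', norm_div _ (max r ‖w‖), Real.norm_of_nonneg hN.le,
    Real.norm_eq_abs]
  have h4 : r / max r ‖z‖ * (|max r ‖w‖ - max r ‖z‖| / max r ‖w‖) * ‖w‖ ≤ ‖z - w‖ := by
    calc _ = r / max r ‖z‖ * (|max r ‖w‖ - max r ‖z‖| * (‖w‖ / max r ‖w‖)) := by ring
      _ ≤ 1 * (‖z - w‖ * 1) := by gcongr
      _ = _ := by ring
  have h5 := mul_le_mul_of_nonneg_right h1 (norm_nonneg (z - w))
  push_cast
  linarith

/-- The flow of `v(z) = -z u(z)` on a closed ball of radius `r < 1`, up to time `t`. The field is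
replaced by the bounded, globally Lipschitz field `v ∘ radial r`, for which Picard-Lindelöf applies
on the whole of `[0, t]`; as `Re u ≥ 0`, norms decrease along its trajectories, which therefore
never leave the ball where it agrees with `v`. -/
lemma exists_flow {u : ℂ → ℂ} (hu : DifferentiableOn ℂ u (ball (0 : ℂ) 1))
    (hure : ∀ z ∈ ball (0 : ℂ) 1, 0 ≤ (u z).re) {t : ℝ} (ht : 0 ≤ t) {r : ℝ} (hr : 0 < r)
    (hr1 : r < 1) :
    ∃ α : ℂ → ℝ → ℂ, ContinuousOn (fun z => α z t) (closedBall 0 r) ∧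
      ∀ z ∈ closedBall (0 : ℂ) r, α z 0 = z ∧ ∀ s ∈ Icc 0 t, ‖α z s‖ ≤ ‖z‖ ∧
        HasDerivWithinAt (α z) (-(α z s) * u (α z s)) (Icc 0 t) s := by
  set v : ℂ → ℂ := fun z => -z * u z with hv
  have hsub : closedBall (0 : ℂ) r ⊆ ball 0 1 := closedBall_subset_ball hr1
  have hvd : DifferentiableOn ℂ v (ball (0 : ℂ) 1) := differentiableOn_id.neg.mul hu
  obtain ⟨L, hL⟩ := (isCompact_closedBall (0 : ℂ) r).exists_bound_of_continuousOn
    (hvd.continuousOn.mono hsub)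
  obtain ⟨K, hK⟩ := (isCompact_closedBall (0 : ℂ) r).exists_bound_of_continuousOn
    ((hvd.deriv isOpen_ball).continuousOn.mono hsub)
  have hL0 : 0 ≤ L := (norm_nonneg _).trans (hL 0 (mem_closedBall_self hr.le))
  have hvl : LipschitzOnWith K.toNNReal v (closedBall 0 r) :=
    Convex.lipschitzOnWith_of_nnnorm_deriv_le
      (fun z hz => hvd.differentiableAt (isOpen_ball.mem_nhds (hsub hz)))
      (fun z hz => by
        rw [← NNReal.coe_le_coe, coe_nnnorm]
        exact (hK z hz).trans (Real.le_coe_toNNReal K)) (convex_closedBall _ _)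
  have hmem : ∀ z, radial r z ∈ closedBall (0 : ℂ) r := fun z => by
    simpa using norm_radial_le hr z
  have hVl : LipschitzWith (K.toNNReal * 2) (v ∘ radial r) := by
    rw [← lipschitzOnWith_univ]
    exact hvl.comp (lipschitzWith_radial hr).lipschitzOnWith fun z _ => hmem z
  have hPL : IsPicardLindelof (fun _ : ℝ => v ∘ radial r) (tmin := 0) (tmax := t)
      ⟨0, left_mem_Icc.mpr ht⟩ (0 : ℂ) (r.toNNReal + L.toNNReal * t.toNNReal) r.toNNReal
      L.toNNReal (K.toNNReal * 2) := by
    refine ⟨fun _ _ => hVl.lipschitzOnWith, fun _ _ => continuousOn_const, fun _ _ x _ => ?_, ?_⟩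
    · rw [Real.coe_toNNReal _ hL0]; exact hL _ (hmem x)
    · simp [Real.coe_toNNReal _ ht, ht]
  obtain ⟨α, hα, L', hα'⟩ :=
    hPL.exists_forall_mem_closedBall_eq_hasDerivWithinAt_lipschitzOnWith
  rw [Real.coe_toNNReal _ hr.le] at hα hα'
  refine ⟨α, (hα' t (right_mem_Icc.mpr ht)).continuousOn, fun z hz => ?_⟩
  obtain ⟨hz0, hzd⟩ := hα z hz
  refine ⟨hz0, ?_⟩
  have hanti : AntitoneOn (fun s => ‖α z s‖ ^ 2) (Icc 0 t) := by
    have hd : ∀ s ∈ interior (Icc 0 t), HasDerivAt (fun s => ‖α z s‖ ^ 2)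
        (2 * inner ℝ (α z s) ((v ∘ radial r) (α z s))) s := by
      intro s hs
      exact ((hzd s (interior_subset hs)).hasDerivAt (mem_interior_iff_mem_nhds.mp hs)).norm_sq
    refine antitoneOn_of_deriv_nonpos (convex_Icc 0 t) ?_
      (fun s hs => (hd s hs).differentiableAt.differentiableWithinAt) fun s hs => ?_
    · exact (ContinuousOn.norm fun s hs => (hzd s hs).continuousWithinAt).pow 2
    · rw [(hd s hs).deriv]
      have h1 := hure _ (hsub (hmem (α z s)))
      have h2 : 0 ≤ r / max r ‖α z s‖ := by positivity
      have h3 : inner ℝ (α z s) ((v ∘ radial r) (α z s)) =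
          -(r / max r ‖α z s‖ * ((α z s).re ^ 2 + (α z s).im ^ 2) * (u (radial r (α z s))).re) := by
        simp only [Function.comp, hv, Complex.inner]
        generalize u (radial r (α z s)) = a
        simp only [radial, Complex.mul_re, Complex.mul_im, Complex.neg_re, Complex.neg_im,
          Complex.conj_re, Complex.conj_im, Complex.ofReal_re, Complex.ofReal_im]
        ring
      rw [h3]
      have : 0 ≤ r / max r ‖α z s‖ * ((α z s).re ^ 2 + (α z s).im ^ 2) *
        (u (radial r (α z s))).re := by positivity
      linarith
  intro s hs
  have hle : ‖α z s‖ ≤ ‖z‖ := by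
    have := hanti (left_mem_Icc.mpr ht) hs hs.1
    simp only [hz0] at this
    exact (pow_le_pow_iff_left₀ (norm_nonneg _) (norm_nonneg _) two_ne_zero).mp this
  refine ⟨hle, ?_⟩
  have h1 := hzd s hs
  rwa [Function.comp, radial_of_norm_le hr (hle.trans (by simpa using hz))] at h1

/-- The time-`t` map of the flow on a ball of radius `r < 1`. It is continuous and satisfies
`h ∘ f = exp (-t u(0)) h`, and `h` is locally biholomorphic, so it is holomorphic. -/
lemma exists_local_solution {u G : ℂ → ℂ} (hu : DifferentiableOn ℂ u (ball (0 : ℂ) 1))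
    (hure : ∀ z ∈ ball (0 : ℂ) 1, 0 ≤ (u z).re)
    (hne : ∀ z ∈ ball (0 : ℂ) 1, u z ≠ 0)
    (hh : ∀ z ∈ ball (0 : ℂ) 1,
        HasDerivAt (fun z => z * Complex.exp (G z)) (Complex.exp (G z) * (u 0 / u z)) z)
    {t : ℝ} (ht : 0 ≤ t) {r : ℝ} (hr : 0 < r) (hr1 : r < 1) :
    ∃ f : ℂ → ℂ, DifferentiableOn ℂ f (ball 0 r) ∧ f 0 = 0 ∧
      ∀ z ∈ ball (0 : ℂ) r, ‖f z‖ ≤ ‖z‖ ∧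
        f z * Complex.exp (G (f z)) = Complex.exp (-(t : ℂ) * u 0) * (z * Complex.exp (G z)) := by
  obtain ⟨α, hc, hα⟩ := exists_flow hu hure ht hr hr1
  have h0 : (0 : ℂ) ∈ ball (0 : ℂ) 1 := mem_ball_self one_pos
  have hsub : ball (0 : ℂ) r ⊆ ball 0 1 := ball_subset_ball hr1.le
  have htI := right_mem_Icc.mpr ht
  have hmem : ∀ z ∈ closedBall (0 : ℂ) r, ∀ s ∈ Icc 0 t, α z s ∈ ball (0 : ℂ) 1 := by
    intro z hz s hs
    have := ((hα z hz).2 s hs).1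
    have hz' : ‖z‖ ≤ r := by simpa using hz
    rw [mem_ball_zero_iff]
    linarith
  have hconj : ∀ z ∈ ball (0 : ℂ) r, α z t * Complex.exp (G (α z t)) =
      Complex.exp (-(t : ℂ) * u 0) * (z * Complex.exp (G z)) := by
    intro z hz
    obtain ⟨hz0, hzd⟩ := hα z (ball_subset_closedBall hz)
    -- `h (α z s) exp (s u(0))` is constant along the trajectory
    have hd : ∀ s ∈ Icc 0 t, HasDerivWithinAt
        (fun s : ℝ => α z s * Complex.exp (G (α z s)) * Complex.exp ((s : ℂ) * u 0)) 0
        (Icc 0 t) s := by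
      intro s hs
      have hm := hmem z (ball_subset_closedBall hz) s hs
      have h1 := (hh _ hm).comp_hasDerivWithinAt s (hzd s hs).2
      have h2 : HasDerivWithinAt (fun s : ℝ => Complex.exp ((s : ℂ) * u 0))
          (Complex.exp ((s : ℂ) * u 0) * (1 * u 0)) (Icc 0 t) s :=
        ((Complex.ofRealCLM.hasDerivAt.mul_const (u 0)).cexp).hasDerivWithinAt
      convert! h1.mul h2 using 1
      have := hne _ hm
      simp only [Function.comp]
      field_simp
      ring
    have hI : ∀ s ∈ Ico 0 t, HasDerivWithinAt
        (fun s : ℝ => α z s * Complex.exp (G (α z s)) * Complex.exp ((s : ℂ) * u 0)) 0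
        (Ici s) s := fun s hs => (hd s (Ico_subset_Icc_self hs)).mono_of_mem_nhdsWithin
          (Icc_mem_nhdsGE_of_mem hs)
    have := constant_of_has_deriv_right_zero (fun s hs => (hd s hs).continuousWithinAt) hI t htI
    simp only [hz0, Complex.ofReal_zero, zero_mul, Complex.exp_zero, mul_one] at this
    have he : Complex.exp (-(t : ℂ) * u 0) * Complex.exp ((t : ℂ) * u 0) = 1 := by
      rw [← Complex.exp_add]; simp
    rw [← this]
    linear_combination -(α z t * Complex.exp (G (α z t))) * he
  refine ⟨fun z => α z t, fun z hz => ?_, ?_, fun z hz =>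
    ⟨((hα z (ball_subset_closedBall hz)).2 t htI).1, hconj z hz⟩⟩
  · have hm := hmem z (ball_subset_closedBall hz) t htI
    refine (HasDerivAt.of_comp_left (hc.continuousAt (closedBall_mem_nhds_of_mem hz)) (hh _ hm)
      ((hh z (hsub hz)).const_mul (Complex.exp (-(t : ℂ) * u 0))) ?_
      ?_).differentiableAt.differentiableWithinAt
    · exact mul_ne_zero (Complex.exp_ne_zero _) (div_ne_zero (hne 0 h0) (hne _ hm))
    · filter_upwards [isOpen_ball.mem_nhds hz] with w hw using hconj w hw
  · simpa using ((hα 0 (mem_closedBall_self hr.le)).2 t htI).1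

theorem unique_solution_of_functional_equation
    (u : ℂ → ℂ)
    (hu : DifferentiableOn ℂ u (ball (0 : ℂ) 1))
    (hu0 : ¬ ∀ z ∈ ball (0 : ℂ) 1, u z = 0)
    (hure : ∀ z ∈ ball (0 : ℂ) 1, 0 ≤ (u z).re)
    (β : ℂ) (hβ : β = u 0)
    (t : ℝ) (ht : 0 ≤ t) :
    ∃ f : ℂ → ℂ,
      (DifferentiableOn ℂ f (ball (0 : ℂ) 1) ∧
        MapsTo f (ball (0 : ℂ) 1) (ball (0 : ℂ) 1) ∧
        (∀ z ∈ ball (0 : ℂ) 1, -(f z) * u (f z) = (-z * u z) * deriv f z) ∧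
        deriv f 0 = Complex.exp (-(t : ℂ) * β)) ∧
      ∀ g : ℂ → ℂ,
        (DifferentiableOn ℂ g (ball (0 : ℂ) 1) ∧
          MapsTo g (ball (0 : ℂ) 1) (ball (0 : ℂ) 1) ∧
          (∀ z ∈ ball (0 : ℂ) 1, -(g z) * u (g z) = (-z * u z) * deriv g z) ∧
          deriv g 0 = Complex.exp (-(t : ℂ) * β)) →
        EqOn g f (ball (0 : ℂ) 1) := by
  subst hβ
  have h0 : (0 : ℂ) ∈ ball (0 : ℂ) 1 := mem_ball_self one_pos
  have hne := ne_zero_of_re_nonneg hu hu0 hure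
  obtain ⟨G, G', hG, hG', hh⟩ := exists_koenigs hu hne
  set h : ℂ → ℂ := fun z => z * Complex.exp (G z) with hdef
  have hhd : DifferentiableOn ℂ h (ball (0 : ℂ) 1) := fun z hz =>
    (hh z hz).differentiableAt.differentiableWithinAt
  have hh' : ∀ z ∈ ball (0 : ℂ) 1, Complex.exp (G z) * (u 0 / u z) ≠ 0 := fun z hz =>
    mul_ne_zero (Complex.exp_ne_zero _) (div_ne_zero (hne 0 h0) (hne z hz))
  have hh0 : deriv h 0 ≠ 0 := by rw [(hh 0 h0).deriv]; exact hh' 0 h0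
  have hloc := fun (r : ℝ) (hr : 0 < r ∧ r < 1) =>
    exists_local_solution hu hure hne hh ht hr.1 hr.2
  choose! F hFd hF0 hF using hloc
  -- the local solutions agree wherever two of them are defined, so they glue
  set ρ : ℂ → ℝ := fun z => (1 + ‖z‖) / 2 with hρ
  have hρ' : ∀ z ∈ ball (0 : ℂ) 1, (0 < ρ z ∧ ρ z < 1) ∧ ‖z‖ < ρ z := by
    intro z hz
    rw [mem_ball_zero_iff] at hz
    have := norm_nonneg z
    simp only [hρ]
    refine ⟨⟨?_, ?_⟩, ?_⟩ <;> linarith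
  have hglue : ∀ r, (0 < r ∧ r < 1) → EqOn (fun z => F (ρ z) z) (F r) (ball 0 r) := by
    intro r hr z hz
    have hz1 := hρ' z (ball_subset_ball hr.2.le hz)
    have hR : 0 < min r (ρ z) := lt_min hr.1 hz1.1.1
    have hs1 : ball (0 : ℂ) (min r (ρ z)) ⊆ ball 0 r := ball_subset_ball (min_le_left _ _)
    have hs2 : ball (0 : ℂ) (min r (ρ z)) ⊆ ball 0 (ρ z) := ball_subset_ball (min_le_right _ _)
    refine eqOn_of_comp_eq hR hhd hh0 ((hFd _ hz1.1).mono hs2) ((hFd r hr).mono hs1)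
      (hF0 _ hz1.1) (hF0 r hr) (fun w hw => ?_) ?_
    · exact (hF _ hz1.1 w (hs2 hw)).2.trans (hF r hr w (hs1 hw)).2.symm
    · rw [mem_ball_zero_iff] at hz ⊢
      exact lt_min hz hz1.2
  set f : ℂ → ℂ := fun z => F (ρ z) z with hfdef
  have hfd : DifferentiableOn ℂ f (ball (0 : ℂ) 1) := by
    intro z hz
    obtain ⟨hz1, hz2⟩ := hρ' z hz
    have hn : ball (0 : ℂ) (ρ z) ∈ nhds z := isOpen_ball.mem_nhds (by simpa using hz2)
    refine DifferentiableAt.differentiableWithinAt ?_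
    refine ((hFd _ hz1).differentiableAt hn).congr_of_eventuallyEq ?_
    filter_upwards [hn] with w hw using hglue _ hz1 hw
  have hfp : ∀ z ∈ ball (0 : ℂ) 1, ‖f z‖ ≤ ‖z‖ ∧
      h (f z) = Complex.exp (-(t : ℂ) * u 0) * h z := by
    intro z hz
    obtain ⟨hz1, hz2⟩ := hρ' z hz
    exact hF _ hz1 z (by simpa using hz2)
  have hf0 : f 0 = 0 := by simpa using (hfp 0 h0).1
  have hmaps : MapsTo f (ball (0 : ℂ) 1) (ball (0 : ℂ) 1) := fun z hz => by
    have := (hfp z hz).1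
    rw [mem_ball_zero_iff] at hz ⊢
    linarith
  have hderiv : ∀ z ∈ ball (0 : ℂ) 1, Complex.exp (G (f z)) * (u 0 / u (f z)) * deriv f z =
      Complex.exp (-(t : ℂ) * u 0) * (Complex.exp (G z) * (u 0 / u z)) := by
    intro z hz
    have h1 := (hh _ (hmaps hz)).comp z
      (hfd.differentiableAt (isOpen_ball.mem_nhds hz)).hasDerivAt
    have h2 := (hh z hz).const_mul (Complex.exp (-(t : ℂ) * u 0))
    refine h1.unique (h2.congr_of_eventuallyEq ?_)
    filter_upwards [isOpen_ball.mem_nhds hz] with w hw using (hfp w hw).2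
  refine ⟨f, ⟨hfd, hmaps, fun z hz => ?_, ?_⟩, ?_⟩
  · -- differentiate `h ∘ f = c h` and cancel `h' (f z)`, using `v h' = -u(0) h` twice
    apply mul_left_cancel₀ (hh' _ (hmaps hz))
    have h1 := hderiv z hz
    have h2 := (hfp z hz).2
    simp only [hdef] at h2
    have h3 := hne z hz
    have h4 := hne _ (hmaps hz)
    have h5 : u 0 / u (f z) * u (f z) = u 0 := div_mul_cancel₀ _ h4
    have h6 : u 0 / u z * u z = u 0 := div_mul_cancel₀ _ h3
    linear_combination (z * u z) * h1 - u 0 * h2 - Complex.exp (G (f z)) * f z * h5 +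
      Complex.exp (-(t : ℂ) * u 0) * Complex.exp (G z) * z * h6
  · have h1 := hderiv 0 h0
    rw [hf0] at h1
    exact mul_left_cancel₀ (hh' 0 h0) (h1.trans (mul_comm _ _))
  · rintro g ⟨hgd, hgm, hge, hg'⟩
    obtain ⟨hg0, hgc⟩ := koenigs_comp_eq hne hG hG' hh hgd hgm hge
    refine eqOn_of_comp_eq one_pos hhd hh0 hgd hfd hg0 hf0 fun z hz => ?_
    rw [(hfp z hz).2, ← hg']
    exact hgc z hz
end
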